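/- arXiv:2507.23075 — 2 statements merged into one kernel-verified Lean document; each statement's English description precedes it below -/
import Mathlib

section
/- Every polynomial function f on M_n(ℂ) × M_n(ℂ) that is invariant under simultaneous conjugation (i.e. f(g X g⁻¹, g Y g⁻¹) = f(X,Y) for all g ∈ GL_n(ℂ) and all (X,Y)) agrees at every point of Ĉ_n with some element of the ℂ-subalgebra of polynomial functions generated by {(X,Y) ↦ tr(X^a · Y^b) : 0 ≤ a ≤ n, 0 ≤ b ≤ n}. -/
open MvPolynomial Matrix

/-- Polynomial functions on `M_n(ℂ) × M_n(ℂ)`, represented as polynomials in the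
entries of the two matrices. -/
abbrev PolyFun (n : ℕ) := MvPolynomial ((Fin n × Fin n) ⊕ (Fin n × Fin n)) ℂ

/-- The matrix of coordinate functions `X_{jk}`. -/
noncomputable def Xmat (n : ℕ) : Matrix (Fin n) (Fin n) (PolyFun n) :=
  fun i j => MvPolynomial.X (Sum.inl (i, j))

/-- The matrix of coordinate functions `Y_{jk}`. -/
noncomputable def Ymat (n : ℕ) : Matrix (Fin n) (Fin n) (PolyFun n) :=
  fun i j => MvPolynomial.X (Sum.inr (i, j))

/-- Traceless part `A = X - (tr X / n) I_n`. -/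
noncomputable def Amat (n : ℕ) : Matrix (Fin n) (Fin n) (PolyFun n) :=
  Xmat n - (MvPolynomial.C ((n : ℂ)⁻¹) * Matrix.trace (Xmat n)) • (1 : Matrix (Fin n) (Fin n) (PolyFun n))

/-- Traceless part `B = Y - (tr Y / n) I_n`. -/
noncomputable def Bmat (n : ℕ) : Matrix (Fin n) (Fin n) (PolyFun n) :=
  Ymat n - (MvPolynomial.C ((n : ℂ)⁻¹) * Matrix.trace (Ymat n)) • (1 : Matrix (Fin n) (Fin n) (PolyFun n))

/-- The polynomial function `(X,Y) ↦ tr (A^p B^q)`. -/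
noncomputable def trAB (n p q : ℕ) : PolyFun n :=
  Matrix.trace (Amat n ^ p * Bmat n ^ q)

/-- The polynomial function `(X,Y) ↦ tr (X^a Y^b)`. -/
noncomputable def trXY (n a b : ℕ) : PolyFun n :=
  Matrix.trace (Xmat n ^ a * Ymat n ^ b)

/-- The Poisson bracket
`{F,G} = Σ_{j,k} ∂F/∂X_{jk} ∂G/∂Y_{kj} − ∂F/∂Y_{jk} ∂G/∂X_{kj}`. -/
noncomputable def pbracket {n : ℕ} (F G : PolyFun n) : PolyFun n :=
  ∑ j : Fin n, ∑ k : Fin n,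
    (MvPolynomial.pderiv (Sum.inl (j, k)) F * MvPolynomial.pderiv (Sum.inr (k, j)) G
      - MvPolynomial.pderiv (Sum.inr (j, k)) F * MvPolynomial.pderiv (Sum.inl (k, j)) G)

/-- Evaluation of a polynomial function at a pair of matrices. -/
noncomputable def evalP {n : ℕ} (X Y : Matrix (Fin n) (Fin n) ℂ) (F : PolyFun n) : ℂ :=
  MvPolynomial.eval (Sum.elim (fun p => X p.1 p.2) (fun p => Y p.1 p.2)) F

/-- The Calogero–Moser variety `Ĉ_n = {(X,Y) : rank([X,Y] − i I_n) = 1}`. -/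
def Chat (n : ℕ) : Set (Matrix (Fin n) (Fin n) ℂ × Matrix (Fin n) (Fin n) ℂ) :=
  {P | ((P.1 * P.2 - P.2 * P.1) - Complex.I • (1 : Matrix (Fin n) (Fin n) ℂ)).rank = 1}

/-- The traceless Calogero–Moser variety
`Ŝ_n = {(X,Y) : tr X = tr Y = 0, rank([X,Y] − i I_n) = 1}`. -/
def Shat (n : ℕ) : Set (Matrix (Fin n) (Fin n) ℂ × Matrix (Fin n) (Fin n) ℂ) :=
  {P | Matrix.trace P.1 = 0 ∧ Matrix.trace P.2 = 0 ∧
    ((P.1 * P.2 - P.2 * P.1) - Complex.I • (1 : Matrix (Fin n) (Fin n) ℂ)).rank = 1}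

/-- The set `ℱ = {tr A², tr B², tr A³, (tr AB)²}`. -/
noncomputable def calF (n : ℕ) : Set (PolyFun n) :=
  {trAB n 2 0, trAB n 0 2, trAB n 3 0, (trAB n 1 1) ^ 2}

/-- The smallest ℂ-linear subspace of the polynomial functions containing `S`
and closed under the Poisson bracket. -/
inductive LieGen (n : ℕ) (S : Set (PolyFun n)) : PolyFun n → Prop
  | base {f : PolyFun n} : f ∈ S → LieGen n S f
  | zero : LieGen n S 0
  | add {f g : PolyFun n} : LieGen n S f → LieGen n S g → LieGen n S (f + g)
  | smul (c : ℂ) {f : PolyFun n} : LieGen n S f → LieGen n S (c • f)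
  | bracket {f g : PolyFun n} : LieGen n S f → LieGen n S g → LieGen n S (pbracket f g)

/-!
Write `[X, Y] - c = T = v wᵀ`. Exchanging adjacent letters of a word in `X` and `Y` inside
`tr (U T)` changes it by products of traces of shorter words, and `tr (X^a [X, Y^(b+1)]) = 0`
then expresses the traces of sorted words through the `tr (X^a Y^b)`, which Newton's identities
and the Cayley-Hamilton theorem reduce to `a, b ≤ n`. So all `tr (U T)` lie in the algebra `A`
generated by these traces.

For words `U_i` and `W_j`, let `Q` be the matrix with rows `wᵀ U_i` and `P` the one with columns
`W_j v`. The entries of `Q P`, `Q X P` and `Q Y P` have the form `tr (U T)`. Where `det (Q P) ≠ 0`,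
an invariant has the same value at `(X, Y)` and `(P⁻¹ X P, P⁻¹ Y P)`, whose entries are fractions
of elements of `A` with denominator `det (Q P)`; so a power of this determinant takes the invariant
into `A`. The `n × n` determinants `det (Q P)` generate the unit ideal of `A`: in a residue field, a
maximal nonsingular minor of the Hankel matrix `tr (U W T)` of size `r` yields an `r`-dimensional
representation in which the trace of `[X, Y] - c` is `-c r`, while it is also `tr T = -c n`.
-/

section Newton

open scoped Polynomial
open Finset.HasAntidiagonal (antidiagonal mem_antidiagonal)

variable {ι R K : Type*} [Fintype ι] [DecidableEq ι] [CommRing R] [Field K] [CharZero K]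
  [Algebra K R]

theorem derivative_det_eq_sum_det_updateRow (M : Matrix ι ι R[X]) :
    Polynomial.derivative M.det =
      ∑ i, (M.updateRow i fun j => Polynomial.derivative (M i j)).det := by
  simp only [det_apply, Polynomial.derivative_sum]
  rw [Finset.sum_comm]
  refine Finset.sum_congr rfl fun σ _ => ?_
  rw [← Equiv.sum_comp σ, Polynomial.derivative_smul, Polynomial.derivative_prod_finset,
    Finset.smul_sum]
  refine Finset.sum_congr rfl fun j _ => congrArg (Equiv.Perm.sign σ • ·) ?_
  rw [← Finset.prod_erase_mul _ _ (Finset.mem_univ j), updateRow_self]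
  congr 1
  refine Finset.prod_congr rfl fun k hk => ?_
  rw [updateRow_ne (σ.injective.ne (Finset.ne_of_mem_erase hk))]

theorem derivative_det (M : Matrix ι ι R[X]) :
    Polynomial.derivative M.det = (M.adjugate * M.map Polynomial.derivative).trace := by
  rw [derivative_det_eq_sum_det_updateRow, trace_mul_comm]
  refine Finset.sum_congr rfl fun i _ => ?_
  rw [← cramer_transpose_apply, cramer_eq_adjugate_mulVec, ← adjugate_transpose, diag_apply,
    mul_apply]
  exact Finset.sum_congr rfl fun j _ => mul_comm _ _

theorem coeff_matPolyEquiv_adjugate_one_sub_X_smul (M : Matrix ι ι R) (k : ℕ) :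
    (matPolyEquiv (1 - (Polynomial.X : R[X]) • M.map Polynomial.C).adjugate).coeff k =
      ∑ p ∈ antidiagonal k, M.charpolyRev.coeff p.1 • M ^ p.2 := by
  set q := matPolyEquiv (1 - (Polynomial.X : R[X]) • M.map Polynomial.C).adjugate with hq
  have hmul : q * (1 - Polynomial.X * Polynomial.C M) =
      M.charpolyRev.map (algebraMap R (Matrix ι ι R)) := by
    rw [← matPolyEquiv_map_C, ← Polynomial.map_X (algebraMap R (Matrix ι ι R)),
      ← matPolyEquiv_map_smul, ← map_one matPolyEquiv, ← map_sub, hq, ← map_mul, adjugate_mul,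
      matPolyEquiv_smul_one, charpolyRev]
  have hcoeff (m : ℕ) : (q * (1 - Polynomial.X * Polynomial.C M)).coeff m =
      M.charpolyRev.coeff m • 1 := by
    rw [hmul, Polynomial.coeff_map, Algebra.algebraMap_eq_smul_one]
  simp only [mul_sub, mul_one, ← mul_assoc, Polynomial.coeff_sub, Polynomial.coeff_mul_C]
    at hcoeff
  induction k with
  | zero => simpa using hcoeff 0
  | succ k ih =>
    rw [Finset.Nat.sum_antidiagonal_succ', pow_zero, ← hcoeff (k + 1), Polynomial.coeff_mul_X, ih]
    simp only [Finset.sum_mul, smul_mul_assoc, ← pow_succ]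
    abel

theorem succ_mul_coeff_charpolyRev (M : Matrix ι ι R) (k : ℕ) :
    (k + 1) * M.charpolyRev.coeff (k + 1) =
      -∑ p ∈ antidiagonal k, M.charpolyRev.coeff p.1 * (M ^ (p.2 + 1)).trace := by
  have hderiv : (1 - (Polynomial.X : R[X]) • M.map Polynomial.C).map Polynomial.derivative =
      -M.map Polynomial.C := by
    ext1 i j
    simp [one_apply, apply_ite Polynomial.derivative]
  have htrace (N : Matrix ι ι R[X]) : N.trace.coeff k = ((matPolyEquiv N).coeff k).trace := by
    simp [trace, matPolyEquiv_coeff_apply, Polynomial.finsetSum_coeff]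
  calc (k + 1) * M.charpolyRev.coeff (k + 1)
      = (Polynomial.derivative M.charpolyRev).coeff k := by
        rw [Polynomial.coeff_derivative, mul_comm]
    _ = -((matPolyEquiv (1 - (Polynomial.X : R[X]) • M.map Polynomial.C).adjugate).coeff k
          * M).trace := by
        rw [charpolyRev, derivative_det, hderiv, mul_neg, trace_neg, Polynomial.coeff_neg, htrace,
          map_mul, matPolyEquiv_map_C, Polynomial.coeff_mul_C]
    _ = _ := by
        simp only [coeff_matPolyEquiv_adjugate_one_sub_X_smul, Finset.sum_mul, smul_mul_assoc,
          ← pow_succ, trace_sum, trace_smul, smul_eq_mul]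

theorem coeff_charpolyRev_mem (A : Subalgebra K R) {M : Matrix ι ι R} {m : ℕ}
    (hM : ∀ k ≤ m, (M ^ k).trace ∈ A) {k : ℕ} (hk : k ≤ m) : M.charpolyRev.coeff k ∈ A := by
  induction k using Nat.strong_induction_on with
  | _ k ih =>
    rcases k with _ | k
    · rw [Polynomial.coeff_zero_eq_eval_zero, eval_charpolyRev]
      exact A.one_mem
    have hmem : ((k + 1 : ℕ) : K) • M.charpolyRev.coeff (k + 1) ∈ A := by
      rw [Nat.cast_smul_eq_nsmul, nsmul_eq_mul, Nat.cast_succ, succ_mul_coeff_charpolyRev]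
      refine A.neg_mem (A.sum_mem fun p hp => ?_)
      have hp := mem_antidiagonal.1 hp
      exact A.mul_mem (ih _ (by lia) (by lia)) (hM _ (by lia))
    exact (A.toSubmodule.smul_mem_iff (Nat.cast_ne_zero.2 k.succ_ne_zero)).1 hmem

theorem coeff_charpoly_mem (A : Subalgebra K R) {M : Matrix ι ι R}
    (hM : ∀ k ≤ Fintype.card ι, (M ^ k).trace ∈ A) (k : ℕ) : M.charpoly.coeff k ∈ A := by
  nontriviality R
  rcases le_or_gt k (Fintype.card ι) with hk | hk
  · have h := coeff_charpolyRev_mem A hM (Nat.sub_le (Fintype.card ι) k)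
    rwa [← reverse_charpoly, Polynomial.coeff_reverse, charpoly_natDegree_eq_dim,
      Polynomial.revAt_le (Nat.sub_le _ _), Nat.sub_sub_self hk] at h
  · rw [Polynomial.coeff_eq_zero_of_natDegree_lt (by rwa [charpoly_natDegree_eq_dim])]
    exact A.zero_mem

theorem trace_pow_mul_mem (A : Subalgebra K R) {M N : Matrix ι ι R}
    (hM : ∀ k ≤ Fintype.card ι, (M ^ k).trace ∈ A)
    (hMN : ∀ k < Fintype.card ι, (M ^ k * N).trace ∈ A) (k : ℕ) : (M ^ k * N).trace ∈ A := by
  nontriviality R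
  induction k using Nat.strong_induction_on with
  | _ k ih =>
    rcases lt_or_ge k (Fintype.card ι) with hk | hk
    · exact hMN k hk
    have hpow : M ^ k * N =
        -∑ i ∈ Finset.range (Fintype.card ι),
          M.charpoly.coeff i • (M ^ (i + (k - Fintype.card ι)) * N) := by
      have h := M.aeval_self_charpoly
      rw [M.charpoly_monic.as_sum, charpoly_natDegree_eq_dim, map_add, map_pow,
        Polynomial.aeval_X] at h
      rw [← Nat.add_sub_of_le hk, pow_add, eq_neg_of_add_eq_zero_left h]
      simp [Finset.sum_mul, pow_add, Algebra.smul_def, mul_assoc]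
    rw [hpow, trace_neg, trace_sum]
    refine A.neg_mem (A.sum_mem fun i hi => ?_)
    rw [trace_smul]
    exact A.mul_mem (coeff_charpoly_mem A hM i) (ih _ (by have := Finset.mem_range.1 hi; lia))

theorem trace_pow_mul_pow_mem (A : Subalgebra K R) {x y : Matrix ι ι R}
    (hxy : ∀ a ≤ Fintype.card ι, ∀ b ≤ Fintype.card ι, (x ^ a * y ^ b).trace ∈ A) (a b : ℕ) :
    (x ^ a * y ^ b).trace ∈ A := by
  have hx : ∀ k ≤ Fintype.card ι, (x ^ k).trace ∈ A := fun k hk => by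
    simpa using hxy k hk 0 (Nat.zero_le _)
  have hy : ∀ k ≤ Fintype.card ι, (y ^ k).trace ∈ A := fun k hk => by
    simpa using hxy 0 (Nat.zero_le _) k hk
  refine trace_pow_mul_mem A hx (fun k hk => ?_) a
  rw [trace_mul_comm]
  refine trace_pow_mul_mem A hy (fun l hl => ?_) b
  rw [trace_mul_comm]
  exact hxy k hk.le l hl.le

end Newton

section RankOneCommutator

open Finset.HasAntidiagonal (antidiagonal mem_antidiagonal)

theorem sum_antidiagonal_pow_mul_commutator_mul_pow {S : Type*} [Ring S] (x y : S) (m : ℕ) :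
    ∑ p ∈ antidiagonal m, y ^ p.1 * (x * y - y * x) * y ^ p.2 =
      x * y ^ (m + 1) - y ^ (m + 1) * x := by
  induction m with
  | zero => simp
  | succ m ih =>
    rw [Finset.Nat.sum_antidiagonal_succ']
    simp only [pow_succ y, pow_zero, mul_one, ← mul_assoc] at ih ⊢
    rw [← Finset.sum_mul, ih]
    noncomm_ring

theorem sub_mem_of_perm {α M : Type*} [AddCommGroup M] (A : AddSubgroup M) {l₁ l₂ : List α}
    (h : l₁.Perm l₂) (e : List α → M)
    (hswap : ∀ u s t v, (u ++ s :: t :: v).Perm l₁ →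
      e (u ++ s :: t :: v) - e (u ++ t :: s :: v) ∈ A) :
    e l₁ - e l₂ ∈ A := by
  induction h generalizing e with
  | nil => simp
  | cons a _ ih => exact ih (fun l => e (a :: l)) fun u s t v h => hswap (a :: u) s t v (h.cons a)
  | swap a b l => exact hswap [] b a l (.refl _)
  | trans h₁ _ ih₁ ih₂ =>
    rw [← sub_add_sub_cancel]
    exact A.add_mem (ih₁ e hswap) (ih₂ e fun u s t v h => hswap u s t v (h.trans h₁.symm))

theorem exists_perm_replicate_append_replicate {α : Type*} {x y : α} {l : List α}
    (hl : ∀ z ∈ l, z = x ∨ z = y) :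
    ∃ a b, l.Perm (List.replicate a x ++ List.replicate b y) := by
  induction l with
  | nil => exact ⟨0, 0, by simp⟩
  | cons z l ih =>
    obtain ⟨a, b, h⟩ := ih fun z hz => hl z (List.mem_cons_of_mem _ hz)
    rcases hl z List.mem_cons_self with rfl | rfl
    · exact ⟨a + 1, b, h.cons z⟩
    · exact ⟨a, b + 1, (h.cons z).trans List.perm_middle.symm⟩

variable {ι R K : Type*} [Fintype ι] [CommRing R]

theorem trace_mul_vecMulVec_mul_vecMulVec (U W : Matrix ι ι R) (v w : ι → R) :
    (U * vecMulVec v w * W * vecMulVec v w).trace =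
      (U * vecMulVec v w).trace * (W * vecMulVec v w).trace := by
  rw [Matrix.mul_assoc, mul_vecMulVec, mul_vecMulVec, vecMulVec_mul_vecMulVec]
  simp only [trace_vecMulVec]
  rw [dotProduct_smul, smul_eq_mul, dotProduct_comm w, mul_comm]

variable [DecidableEq ι] [Field K] [Algebra K R] {x y : Matrix ι ι R} {v w : ι → R} {c : K}

theorem trace_mul_commutator_mul (h : x * y - y * x = vecMulVec v w + c • 1) (U W : Matrix ι ι R) :
    (U * (x * y - y * x) * W * vecMulVec v w).trace =
      (U * vecMulVec v w).trace * (W * vecMulVec v w).trace +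
        c • (U * W * vecMulVec v w).trace := by
  rw [h, mul_add, add_mul, add_mul, trace_add, trace_mul_vecMulVec_mul_vecMulVec]
  simp only [mul_smul_comm, mul_one, smul_mul_assoc, trace_smul]

theorem sum_antidiagonal_trace_pow_mul_pow_mul_pow_mul {T : Matrix ι ι R}
    (h : x * y - y * x = T + c • 1) (a b : ℕ) :
    ∑ p ∈ antidiagonal b, (y ^ p.1 * x ^ a * y ^ p.2 * T).trace =
      -((b + 1) • c • (x ^ a * y ^ b).trace) := by
  have htrace : (x ^ a * (x * y ^ (b + 1) - y ^ (b + 1) * x)).trace = 0 := by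
    rw [mul_sub, trace_sub, ← mul_assoc, ← pow_succ, pow_succ', mul_assoc, trace_mul_comm,
      mul_assoc, sub_self]
  have hterm (p : ℕ × ℕ) (hp : p ∈ antidiagonal b) :
      (x ^ a * (y ^ p.1 * (x * y - y * x) * y ^ p.2)).trace =
        (y ^ p.2 * x ^ a * y ^ p.1 * T).trace + c • (x ^ a * y ^ b).trace := by
    rw [← mem_antidiagonal.1 hp, h, trace_mul_comm]
    simp only [mul_add, add_mul, trace_add, mul_smul_comm, smul_mul_assoc, trace_smul, mul_one,
      pow_add]
    congr 1
    · rw [trace_mul_comm, ← mul_assoc, ← mul_assoc, trace_mul_comm]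
      simp only [mul_assoc]
    · rw [trace_mul_comm]
  rw [← sum_antidiagonal_pow_mul_commutator_mul_pow, Finset.mul_sum, trace_sum,
    Finset.sum_congr rfl hterm, Finset.sum_add_distrib, Finset.sum_const,
    Finset.Nat.card_antidiagonal] at htrace
  rw [← Finset.Nat.sum_antidiagonal_swap]
  exact eq_neg_of_add_eq_zero_left htrace

theorem trace_prod_swap_sub_mem (A : Subalgebra K R)
    (h : x * y - y * x = vecMulVec v w + c • 1) {s t : Matrix ι ι R}
    (hs : s = x ∨ s = y) (ht : t = x ∨ t = y) {U W : Matrix ι ι R}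
    (hU : (U * vecMulVec v w).trace ∈ A) (hW : (W * vecMulVec v w).trace ∈ A)
    (hUW : (U * W * vecMulVec v w).trace ∈ A) :
    (U * (s * (t * W)) * vecMulVec v w).trace - (U * (t * (s * W)) * vecMulVec v w).trace ∈ A := by
  have key : (U * (x * (y * W)) * vecMulVec v w).trace -
      (U * (y * (x * W)) * vecMulVec v w).trace ∈ A := by
    have hmem := A.add_mem (A.mul_mem hU hW) (A.smul_mem hUW c)
    rw [← trace_mul_commutator_mul h] at hmem
    have hsub : U * (x * (y * W)) * vecMulVec v w - U * (y * (x * W)) * vecMulVec v w =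
        U * (x * y - y * x) * W * vecMulVec v w := by
      noncomm_ring
    rwa [← trace_sub, hsub]
  rcases hs with rfl | rfl <;> rcases ht with rfl | rfl
  · simp
  · exact key
  · simpa using A.neg_mem key
  · simp

variable [CharZero K]

theorem trace_list_prod_mul_mem (A : Subalgebra K R) (h : x * y - y * x = vecMulVec v w + c • 1)
    (hxy : ∀ a b : ℕ, (x ^ a * y ^ b).trace ∈ A) (l : List (Matrix ι ι R))
    (hl : ∀ z ∈ l, z = x ∨ z = y) : (l.prod * vecMulVec v w).trace ∈ A := by
  induction hn : l.length using Nat.strong_induction_on generalizing l with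
  | _ n ih =>
  let e (l : List (Matrix ι ι R)) : R := (l.prod * vecMulVec v w).trace
  have hperm {l'} (hp : l.Perm l') : e l - e l' ∈ A := by
    refine sub_mem_of_perm A.toSubmodule.toAddSubgroup hp e fun u s t r hr => ?_
    have hmem : ∀ z ∈ u ++ s :: t :: r, z = x ∨ z = y := fun z hz => hl z (hr.subset hz)
    have hlen := hr.length_eq
    simp only [List.mem_append, List.mem_cons, List.length_append, List.length_cons]
      at hmem hlen
    have hu := ih _ (by lia) u (fun z hz => hmem z (.inl hz)) rfl
    have hr := ih _ (by lia) r (fun z hz => hmem z (.inr (.inr (.inr hz)))) rfl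
    have hur := ih _ (by rw [List.length_append]; lia) (u ++ r)
      (fun z hz => hmem z ((List.mem_append.1 hz).imp id fun h => .inr (.inr h))) rfl
    rw [List.prod_append] at hur
    simpa only [e, List.prod_append, List.prod_cons, Submodule.mem_toAddSubgroup,
      Subalgebra.mem_toSubmodule] using
      trace_prod_swap_sub_mem A h (hmem s (by simp)) (hmem t (by simp)) hu hr hur
  obtain ⟨a, b, hab⟩ := exists_perm_replicate_append_replicate hl
  have hcyc (p : ℕ × ℕ) (hp : p ∈ antidiagonal b) :
      e l - (y ^ p.1 * x ^ a * y ^ p.2 * vecMulVec v w).trace ∈ A := by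
    have hperm := hperm (l' := List.replicate p.1 y ++ List.replicate a x ++ List.replicate p.2 y)
      (hab.trans (by
        rw [← mem_antidiagonal.1 hp, List.replicate_add, ← List.append_assoc]
        exact List.perm_append_comm.append_right _))
    simpa [e, mul_assoc] using hperm
  have hsum := A.sum_mem hcyc
  rw [Finset.sum_sub_distrib, sum_antidiagonal_trace_pow_mul_pow_mul_pow_mul h, Finset.sum_const,
    Finset.Nat.card_antidiagonal, ← smul_neg, ← smul_sub, ← Nat.cast_smul_eq_nsmul K] at hsum
  have hsub := (A.toSubmodule.smul_mem_iff (Nat.cast_ne_zero.2 b.succ_ne_zero)).1 hsum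
  simpa using A.sub_mem hsub (A.smul_mem (hxy a b) c)

theorem trace_mul_mem_of_mem_closure (A : Subalgebra K R)
    (h : x * y - y * x = vecMulVec v w + c • 1) (hxy : ∀ a b : ℕ, (x ^ a * y ^ b).trace ∈ A)
    {U : Matrix ι ι R} (hU : U ∈ Submonoid.closure {x, y}) : (U * vecMulVec v w).trace ∈ A := by
  obtain ⟨l, hl, rfl⟩ := Submonoid.exists_list_of_mem_closure hU
  exact trace_list_prod_mul_mem A h hxy l hl

end RankOneCommutator

section Hankel

theorem submatrix_mul_inv_mul_submatrix {K α β κ : Type*} [Field K] [Fintype κ] [DecidableEq κ]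
    {g : Matrix α β K} {r : κ → α} {s : κ → β} (hdet : (g.submatrix r s).det ≠ 0)
    (hmax : ∀ (r : κ ⊕ Unit → α) (s : κ ⊕ Unit → β), (g.submatrix r s).det = 0) :
    g.submatrix id s * (g.submatrix r s)⁻¹ * g.submatrix r id = g := by
  ext i j
  let M := g.submatrix r s
  let _ : Invertible M := M.invertibleOfIsUnitDet hdet.isUnit
  have hblock : g.submatrix (Sum.elim r fun _ : Unit => i) (Sum.elim s fun _ : Unit => j) =
      fromBlocks M (g.submatrix r fun _ => j) (g.submatrix (fun _ => i) s)
        (g.submatrix (fun _ => i) fun _ => j) := by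
    ext (_ | _) (_ | _) <;> rfl
  have hzero := hmax (Sum.elim r fun _ => i) (Sum.elim s fun _ => j)
  rw [hblock, det_fromBlocks₁₁, invOf_eq_nonsing_inv, mul_eq_zero, or_iff_right hdet,
    det_unique, Matrix.sub_apply, sub_eq_zero] at hzero
  exact hzero.symm

variable {S R K : Type*} [Monoid S]

/-- The matrix `(b (u i * w j))`, a minor of the Hankel matrix `(b (u * w))` of the function `b` on
the monoid `S`. -/
def hankel {α β : Type*} (b : S → R) (u : α → S) (w : β → S) : Matrix α β R :=
  of fun i j => b (u i * w j)

theorem hankel_mul_shift {α β : Type*} (b : S → R) (u : α → S) (w : β → S) (z : S) :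
    hankel b (fun i => u i * z) w = hankel b u fun j => z * w j := by
  simp only [hankel, mul_assoc]

variable [Field K] {κ : Type*} [Fintype κ] [DecidableEq κ] {b : S → K} {c : K} {x y : S}

theorem hankel_mul_inv_mul_hankel {α β : Type*} {u w : κ → S} (hdet : (hankel b u w).det ≠ 0)
    (hmax : ∀ u w : κ ⊕ Unit → S, (hankel b u w).det = 0) (p : α → S) (q : β → S) :
    hankel b p w * (hankel b u w)⁻¹ * hankel b u q = hankel b p q :=
  congrArg (fun g => g.submatrix p q)
    (submatrix_mul_inv_mul_submatrix (g := hankel b id id) hdet hmax)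

/-- A maximal nonsingular minor yields the representation
`z ↦ (b (u i * z * w j)) * (b (u i * w j))⁻¹` of the monoid, in which `x * y - y * x - c` has
trace `b 1`. -/
theorem mul_card_eq_neg_of_hankel_maximal
    (hb : ∀ p q, b (p * (x * y) * q) - b (p * (y * x) * q) = b p * b q + c * b (p * q))
    {u w : κ → S} (hdet : (hankel b u w).det ≠ 0)
    (hmax : ∀ u w : κ ⊕ Unit → S, (hankel b u w).det = 0) : c * Fintype.card κ = -b 1 := by
  set M := hankel b u w with hM
  let one : Unit → S := 1
  let ρ (z : S) : Matrix κ κ K := hankel b (fun i => u i * z) w * M⁻¹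
  have hρ (z z' : S) : ρ (z * z') = ρ z * ρ z' := by
    have h := hankel_mul_inv_mul_hankel hdet hmax (fun i => u i * z) fun j => z' * w j
    rw [← hankel_mul_shift, ← hankel_mul_shift] at h
    simp only [ρ, ← mul_assoc, h, hM]
  have hcomm : ρ (x * y) - ρ (y * x) = hankel b u one * hankel b one w * M⁻¹ + c • 1 := by
    rw [← mul_nonsing_inv M hdet.isUnit, ← Matrix.smul_mul, ← add_mul, ← sub_mul]
    congr 1
    ext i j
    simpa [hankel, one, mul_apply, hM] using hb (u i) (w j)
  have htrace : (hankel b u one * hankel b one w * M⁻¹).trace = b 1 := by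
    rw [Matrix.mul_assoc, trace_mul_comm, hankel_mul_inv_mul_hankel hdet hmax]
    simp [hankel, one, trace]
  have h := congrArg trace hcomm
  rw [hρ, hρ, trace_sub, trace_mul_comm, sub_self, trace_add, htrace, trace_smul, trace_one,
    smul_eq_mul] at h
  exact eq_neg_of_add_eq_zero_right h.symm

theorem exists_det_hankel_ne_zero [CharZero K] (ι : Type*) [Fintype ι] [DecidableEq ι] (hc : c ≠ 0)
    (hb : ∀ p q, b (p * (x * y) * q) - b (p * (y * x) * q) = b p * b q + c * b (p * q))
    (h1 : b 1 = -(c * Fintype.card ι)) : ∃ u w : ι → S, (hankel b u w).det ≠ 0 := by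
  suffices h : ∀ m ≤ Fintype.card ι, ∃ u w : Fin m → S, (hankel b u w).det ≠ 0 by
    obtain ⟨u, w, huw⟩ := h _ le_rfl
    let e := Fintype.equivFin ι
    exact ⟨u ∘ e, w ∘ e, by rwa [← det_submatrix_equiv_self e] at huw⟩
  intro m hm
  induction m with
  | zero => exact ⟨1, 1, by simp⟩
  | succ m ih =>
    obtain ⟨u, w, huw⟩ := ih (Nat.le_of_succ_le hm)
    by_contra! hmax
    have hcard := mul_card_eq_neg_of_hankel_maximal hb huw fun u w => by
      let e : Fin (m + 1) ≃ Fin m ⊕ Unit := Fintype.equivOfCardEq (by simp)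
      rw [← det_submatrix_equiv_self e]
      exact hmax (u ∘ e) (w ∘ e)
    rw [h1, neg_neg, Fintype.card_fin] at hcard
    have := Nat.cast_injective (mul_left_cancel₀ hc hcard)
    lia

theorem span_range_det_hankel_eq_top [CommRing R] [Algebra K R] [CharZero K] {b : S → R}
    (ι : Type*) [Fintype ι] [DecidableEq ι] (hc : c ≠ 0)
    (hb : ∀ p q, b (p * (x * y) * q) - b (p * (y * x) * q) = b p * b q + c • b (p * q))
    (h1 : b 1 = -(c • (Fintype.card ι : R))) :
    Ideal.span (Set.range fun p : (ι → S) × (ι → S) => (hankel b p.1 p.2).det) = ⊤ := by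
  by_contra hne
  obtain ⟨m, hm, hle⟩ := Ideal.exists_le_maximal _ hne
  let _ := Ideal.Quotient.field m
  have : CharZero (R ⧸ m) := charZero_of_injective_algebraMap (algebraMap K (R ⧸ m)).injective
  let q := Ideal.Quotient.mkₐ K m
  obtain ⟨u, w, huw⟩ := exists_det_hankel_ne_zero (b := fun z => q (b z)) (c := algebraMap K _ c) ι
    (by simpa using hc) (x := x) (y := y)
    (fun p r => by rw [← map_sub, hb]; simp [Algebra.smul_def])
    (by simp [h1, Algebra.smul_def])
  refine huw ?_
  have hmem : (hankel b u w).det ∈ m := hle (Ideal.subset_span ⟨(u, w), rfl⟩)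
  rw [← Ideal.Quotient.eq_zero_iff_mem, RingHom.map_det] at hmem
  exact hmem

end Hankel

section Invariants

variable {ι R K Ω : Type*}

/-- The point with coordinates the entries of the pair of matrices `(x, y)`. -/
def entries (x y : Matrix ι ι R) : (ι × ι) ⊕ (ι × ι) → R :=
  Sum.elim (fun q => x q.1 q.2) fun q => y q.1 q.2

variable [Field K] (A : Subalgebra K (Ω → K))

open scoped Pointwise in
theorem exists_pow_mul_mem_of_eq_eval_div {σ : Type*} {D F : Ω → K} {a : σ → Ω → K} (hD : D ∈ A)
    (ha : ∀ s, a s ∈ A) (f : MvPolynomial σ K)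
    (hF : ∀ p, D p ≠ 0 → F p = eval (fun s => a s p / D p) f) : ∃ N : ℕ, D ^ N * F ∈ A := by
  let z (s : σ) : Ω → K := a s / D
  have hz : D ^ 2 • Set.range z ⊆ A := by
    rintro _ ⟨_, ⟨s, rfl⟩, rfl⟩
    have hDz : D ^ 2 • z s = D * a s := funext fun p => by
      by_cases hp : D p = 0
      · simp [z, hp]
      · simp [z]
        field_simp
    change D ^ 2 • z s ∈ A
    exact hDz ▸ A.mul_mem hD (ha s)
  have hfz : aeval z f ∈ Algebra.adjoin K (Set.range z) := by
    rw [Algebra.adjoin_range_eq_range_aeval]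
    exact ⟨f, rfl⟩
  obtain ⟨N, hN⟩ := Algebra.pow_smul_mem_of_smul_subset_of_mem_adjoin _ _ A hz hfz (A.pow_mem hD 2)
  refine ⟨2 * N + 1, ?_⟩
  have hDF : D ^ (2 * N + 1) * F = D * ((D ^ 2) ^ N • aeval z f) := funext fun p => by
    by_cases hp : D p = 0
    · simp [hp]
    · have hfp : aeval z f p = F p := by
        rw [hF p hp, ← aeval_eq_eval]
        exact map_aeval z (Pi.evalRingHom (fun _ : Ω => K) p) f
      simp only [Pi.mul_apply, Pi.pow_apply, smul_eq_mul, hfp]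
      ring
  exact hDF ▸ A.mul_mem hD (hN N le_rfl)

variable [Fintype ι]

theorem of_vecMul_mul_mul_of_mulVec [CommRing R] {α β : Type*} (v w : ι → R)
    (U : α → Matrix ι ι R) (W : β → Matrix ι ι R) (Z : Matrix ι ι R) :
    (of fun i => w ᵥ* U i) * Z * (of fun j => W j *ᵥ v)ᵀ =
      of fun i j => (U i * Z * W j * vecMulVec v w).trace := by
  ext i j
  rw [of_apply, mul_vecMulVec, trace_vecMulVec, dotProduct_comm, ← mulVec_mulVec, ← mulVec_mulVec,
    dotProduct_mulVec w, dotProduct_mulVec]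
  rfl

variable [DecidableEq ι]

theorem det_mem_of_entries_mem [CommRing R] {S : Type*} [SetLike S R] [SubringClass S R] (A : S)
    {M : Matrix ι ι R} (hM : ∀ i j, M i j ∈ A) : M.det ∈ A := by
  rw [det_apply]
  exact sum_mem fun σ _ => zsmul_mem (prod_mem fun i _ => hM _ _) _

theorem adjugate_apply_mem_of_entries_mem [CommRing R] {S : Type*} [SetLike S R] [SubringClass S R]
    (A : S) {M : Matrix ι ι R} (hM : ∀ i j, M i j ∈ A) (i j : ι) : M.adjugate i j ∈ A := by
  rw [adjugate_apply]
  refine det_mem_of_entries_mem A fun k l => ?_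
  rw [updateRow_apply, Pi.single_apply]
  split_ifs
  exacts [one_mem A, zero_mem A, hM k l]

theorem inv_mul_mul_eq_of_det_mul_ne_zero {P Q : Matrix ι ι K} (h : (Q * P).det ≠ 0)
    (Z : Matrix ι ι K) :
    P⁻¹ * Z * P = (Q * P).det⁻¹ • ((Q * P).adjugate * (Q * Z * P)) := by
  rw [det_mul] at h
  have hQ : IsUnit Q.det := (left_ne_zero_of_mul h).isUnit
  rw [← Matrix.smul_mul, ← Ring.inverse_eq_inv', ← inv_def, Matrix.mul_inv_rev]
  simp only [Matrix.mul_assoc, nonsing_inv_mul_cancel_left _ _ hQ]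

theorem exists_det_pow_mul_invariant_mem {x y P Q : Matrix ι ι (Ω → K)}
    (hQP : ∀ i j, (Q * P) i j ∈ A) (hx : ∀ i j, (Q * x * P) i j ∈ A)
    (hy : ∀ i j, (Q * y * P) i j ∈ A) {f : MvPolynomial ((ι × ι) ⊕ (ι × ι)) K}
    {F : Ω → K} (hF : ∀ p (g : GL ι K), F p =
      eval (entries (g.val * x.map (· p) * g⁻¹.val) (g.val * y.map (· p) * g⁻¹.val)) f) :
    ∃ N : ℕ, (Q * P).det ^ N * F ∈ A := by
  let a (z : Matrix ι ι (Ω → K)) : Matrix ι ι (Ω → K) := (Q * P).adjugate * (Q * z * P)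
  have ha {z : Matrix ι ι (Ω → K)} (hz : ∀ i j, (Q * z * P) i j ∈ A) (i j : ι) : a z i j ∈ A :=
    A.sum_mem fun k _ => A.mul_mem (adjugate_apply_mem_of_entries_mem A hQP i k) (hz k j)
  refine exists_pow_mul_mem_of_eq_eval_div A (a := entries (a x) (a y))
    (det_mem_of_entries_mem A hQP) ?_ f fun p hp => ?_
  · rintro (⟨i, j⟩ | ⟨i, j⟩)
    exacts [ha hx i j, ha hy i j]
  let ev := Pi.evalRingHom (fun _ : Ω => K) p
  have hdet : (Q * P).det p = (ev.mapMatrix Q * ev.mapMatrix P).det := by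
    rw [← map_mul]
    exact RingHom.map_det ev _
  rw [hdet] at hp
  have hP : IsUnit (ev.mapMatrix P).det := by
    rw [det_mul] at hp
    exact (right_ne_zero_of_mul hp).isUnit
  have hconj (z : Matrix ι ι (Ω → K)) (i j : ι) :
      ((ev.mapMatrix P)⁻¹ * ev.mapMatrix z * ev.mapMatrix P) i j = a z i j p / (Q * P).det p := by
    rw [inv_mul_mul_eq_of_det_mul_ne_zero hp, hdet, div_eq_inv_mul]
    simp only [← map_mul, ← RingHom.map_adjugate]
    rfl
  rw [hF p (GeneralLinearGroup.mk'' _ hP)⁻¹]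
  congr 2
  ext (⟨i, j⟩ | ⟨i, j⟩)
  · exact hconj x i j
  · exact hconj y i j

end Invariants

section Main

variable {ι K Ω : Type*} [Fintype ι] [Field K]

theorem exists_eq_vecMulVec_of_rank_eq_one {m : Type*} {T : Matrix m ι K} (hT : T.rank = 1) :
    ∃ (v : m → K) (w : ι → K), T = vecMulVec v w := by
  classical
  obtain ⟨v, -, hv⟩ := finrank_eq_one_iff'.1 hT
  choose w hw using fun j => hv ⟨T.mulVecLin (Pi.single j 1), LinearMap.mem_range_self _ _⟩
  refine ⟨v, w, ?_⟩
  ext i j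
  simpa [vecMulVec_apply, mul_comm] using (congrFun (congrArg Subtype.val (hw j)) i).symm

variable [DecidableEq ι]

theorem mem_of_eq_eval_conj [CharZero K] (A : Subalgebra K (Ω → K)) {x y : Matrix ι ι (Ω → K)}
    {v w : ι → Ω → K} {c : K} (hc : c ≠ 0) (h : x * y - y * x = vecMulVec v w + c • 1)
    (hxy : ∀ a ≤ Fintype.card ι, ∀ b ≤ Fintype.card ι, (x ^ a * y ^ b).trace ∈ A)
    {f : MvPolynomial ((ι × ι) ⊕ (ι × ι)) K} {F : Ω → K}
    (hF : ∀ p (g : GL ι K), F p =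
      eval (entries (g.val * x.map (· p) * g⁻¹.val) (g.val * y.map (· p) * g⁻¹.val)) f) :
    F ∈ A := by
  let S := Submonoid.closure {x, y}
  have hword (U : S) : (U * vecMulVec v w).trace ∈ A :=
    trace_mul_mem_of_mem_closure A h (trace_pow_mul_pow_mem A hxy) U.2
  let X : S := ⟨x, Submonoid.subset_closure (by simp)⟩
  let Y : S := ⟨y, Submonoid.subset_closure (by simp)⟩
  let b (U : S) : A := ⟨(U * vecMulVec v w).trace, hword U⟩
  have hspan := span_range_det_hankel_eq_top (b := b) (x := X) (y := Y) ι hc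
    (fun p q => Subtype.ext <| by
      have hpq := trace_mul_commutator_mul h p q
      rw [mul_sub, sub_mul, sub_mul, trace_sub] at hpq
      exact hpq)
    (Subtype.ext <| by
      have htrace := congrArg trace h
      rw [trace_sub, trace_mul_comm, sub_self, trace_add, trace_smul, trace_one] at htrace
      simpa [b] using eq_neg_of_add_eq_zero_left htrace.symm)
  have hmem : F ∈ (1 : Submodule A (Ω → K)) := by
    refine Submodule.mem_of_span_eq_top_of_smul_pow_mem _ _ hspan F ?_
    rintro ⟨_, ⟨U, W⟩, rfl⟩
    let Q : Matrix ι ι (Ω → K) := of fun i => w ᵥ* (U i : Matrix ι ι (Ω → K))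
    let P : Matrix ι ι (Ω → K) := (of fun j => (W j : Matrix ι ι (Ω → K)) *ᵥ v)ᵀ
    have hQP (Z : S) (i j : ι) : (Q * Z * P) i j ∈ A := by
      rw [of_vecMul_mul_mul_of_mulVec]
      exact hword (U i * Z * W j)
    obtain ⟨N, hN⟩ := exists_det_pow_mul_invariant_mem (P := P) (Q := Q) A
      (fun i j => by simpa using hQP 1 i j) (hQP X) (hQP Y) hF
    have hdet : ((hankel b U W).det : Ω → K) = (Q * P).det := by
      rw [← Matrix.mul_one Q, of_vecMul_mul_mul_of_mulVec]
      simp only [Matrix.mul_one]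
      exact A.val.map_det _
    refine ⟨N, Submodule.mem_one.2 ⟨⟨_, hN⟩, ?_⟩⟩
    rw [Algebra.smul_def, map_pow, Subalgebra.algebraMap_eq]
    exact congrArg (fun D => D ^ N * F) hdet.symm
  obtain ⟨a, rfl⟩ := Submodule.mem_one.1 hmem
  exact a.2

variable (ι) in
/-- The Calogero–Moser set of pairs `(X, Y)` of matrices with `[X, Y] - c` of rank one;
`Chat n` is the case `c = i`. -/
def calogeroMoser (c : K) : Set (Matrix ι ι K × Matrix ι ι K) :=
  {P | (P.1 * P.2 - P.2 * P.1 - c • (1 : Matrix ι ι K)).rank = 1}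

variable (ι K) in
/-- The matrix of coordinate functions of the first matrix of a pair; `Xmat n` is a special
case. -/
noncomputable def genericX : Matrix ι ι (MvPolynomial ((ι × ι) ⊕ (ι × ι)) K) :=
  of fun i j => X (Sum.inl (i, j))

variable (ι K) in
/-- The matrix of coordinate functions of the second matrix of a pair; `Ymat n` is a special
case. -/
noncomputable def genericY : Matrix ι ι (MvPolynomial ((ι × ι) ⊕ (ι × ι)) K) :=
  of fun i j => X (Sum.inr (i, j))

theorem stmt_1_general [CharZero K] {c : K} (hc : c ≠ 0) (f : MvPolynomial ((ι × ι) ⊕ (ι × ι)) K)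
    (hf : ∀ P ∈ calogeroMoser ι c, ∀ g : GL ι K,
      eval (entries (g.val * P.1 * g⁻¹.val) (g.val * P.2 * g⁻¹.val)) f = eval (entries P.1 P.2) f) :
    ∃ g ∈ Algebra.adjoin K {F | ∃ a b : ℕ, a ≤ Fintype.card ι ∧ b ≤ Fintype.card ι ∧
        F = (genericX ι K ^ a * genericY ι K ^ b).trace},
      ∀ P ∈ calogeroMoser ι c, eval (entries P.1 P.2) f = eval (entries P.1 P.2) g := by
  let φ : MvPolynomial ((ι × ι) ⊕ (ι × ι)) K →ₐ[K] calogeroMoser ι c → K :=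
    AlgHom.pi fun P => aeval (entries P.1.1 P.1.2)
  let x := φ.mapMatrix (genericX ι K)
  let y := φ.mapMatrix (genericY ι K)
  have hx (P : calogeroMoser ι c) : x.map (· P) = P.1.1 := by
    ext i j; simp [x, φ, genericX, entries]
  have hy (P : calogeroMoser ι c) : y.map (· P) = P.1.2 := by
    ext i j; simp [y, φ, genericY, entries]
  choose v w hvw using fun P : calogeroMoser ι c => exists_eq_vecMulVec_of_rank_eq_one P.2
  have hcomm : x * y - y * x = vecMulVec (fun i P => v P i) (fun j P => w P j) + c • 1 := by
    rw [← sub_eq_iff_eq_add]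
    ext i j P
    have hP := congrFun₂ (hvw P) i j
    rcases eq_or_ne i j with rfl | hij
    · simpa [mul_apply, ← hx, ← hy, vecMulVec_apply] using hP
    · simpa [mul_apply, ← hx, ← hy, vecMulVec_apply, hij] using hP
  let A := (Algebra.adjoin K {F | ∃ a b : ℕ, a ≤ Fintype.card ι ∧ b ≤ Fintype.card ι ∧
    F = (genericX ι K ^ a * genericY ι K ^ b).trace}).map φ
  have htrace : ∀ a ≤ Fintype.card ι, ∀ b ≤ Fintype.card ι, (x ^ a * y ^ b).trace ∈ A :=
    fun a ha b hb => by
      refine ⟨_, Algebra.subset_adjoin ⟨a, b, ha, hb, rfl⟩, ?_⟩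
      simp only [x, y, ← map_pow, ← map_mul]
      exact AddMonoidHom.map_trace φ _
  obtain ⟨g, hg, hfg⟩ : φ f ∈ A := mem_of_eq_eval_conj A hc hcomm htrace fun P g => by
    rw [hx, hy, hf P.1 P.2]
    rfl
  exact ⟨g, hg, fun P hP => (congrFun hfg ⟨P, hP⟩).symm⟩

end Main

/-- Every polynomial function on `M_n(ℂ) × M_n(ℂ)` invariant under
simultaneous conjugation agrees at every point of `Ĉ_n` with some element of the
ℂ-subalgebra generated by `{(X,Y) ↦ tr(X^a Y^b) : 0 ≤ a, b ≤ n}`. -/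
theorem stmt_1 (n : ℕ) (hn : 1 ≤ n) (f : PolyFun n)
    (hf : ∀ g : GL (Fin n) ℂ, ∀ X Y : Matrix (Fin n) (Fin n) ℂ,
      evalP ((g : Matrix (Fin n) (Fin n) ℂ) * X * ((g⁻¹ : GL (Fin n) ℂ) : Matrix (Fin n) (Fin n) ℂ))
            ((g : Matrix (Fin n) (Fin n) ℂ) * Y * ((g⁻¹ : GL (Fin n) ℂ) : Matrix (Fin n) (Fin n) ℂ)) f
        = evalP X Y f) :
    ∃ g ∈ Algebra.adjoin ℂ {F : PolyFun n | ∃ a b : ℕ, a ≤ n ∧ b ≤ n ∧ F = trXY n a b},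
      ∀ P ∈ Chat n, evalP P.1 P.2 f = evalP P.1 P.2 g := by
  have h := stmt_1_general Complex.I_ne_zero f fun P _ g => hf g P.1 P.2
  rwa [Fintype.card_fin] at h
end

section
/- For all integers j, k, p, q ≥ 1, there exists a polynomial function h on M_n(ℂ) × M_n(ℂ), expressible as a polynomial with complex coefficients in traces of matrix monomials of degree at most j+k+p+q−6, such that at every point of Ĉ_n: {tr A^j B^k, tr A^p B^q} = (jq − kp) · tr(A^{j+p−1} B^{k+q−1}) − (1/n)·( jq · tr(A^{j−1}B^k) · tr(A^p B^{q−1}) − kp · tr(A^j B^{k−1}) · tr(A^{p−1} B^q) ) + h. -/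
open MvPolynomial Matrix

/-- A matrix monomial `(X,Y) ↦ X^{p₁} Y^{q₁} ⋯ X^{p_m} Y^{q_m}`, encoded by the
list of exponent pairs `[(p₁,q₁), …, (p_m,q_m)]`. -/
noncomputable def matMono (n : ℕ) (L : List (ℕ × ℕ)) : Matrix (Fin n) (Fin n) (PolyFun n) :=
  L.foldr (fun pq M => Xmat n ^ pq.1 * Ymat n ^ pq.2 * M) 1

/-- The degree `p₁ + ⋯ + p_m + q₁ + ⋯ + q_m` of a matrix monomial. -/
def monoDeg (L : List (ℕ × ℕ)) : ℕ := (L.map fun pq => pq.1 + pq.2).sum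

/-!
The matrix gradient of `tr AʲBᵏ` in `X` is the traceless part of the derivative of `a ↦ aʲ` at `A`
in the direction `Bᵏ`, and similarly in `Y`. The bracket is a trace of products of such gradients;
taking traceless parts produces the `1/n` terms exactly, and what remains is a sum of `jq` traces
of words in `A`, `B` minus a sum of `kp` such traces. So it suffices that, on the locus where `L =
[A, B] = E + c` with `E` of rank at most one, permuting the letters of a word changes its trace
only by a polynomial in traces of words shorter by four.

A transposition of adjacent letters changes the trace by `tr WL` for a word `W` shorter by two, so
the claim is that `tr WL` is a polynomial in traces of words shorter than `W` by two, by induction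
on the length of `W`. Transposing adjacent letters of `W` itself changes `tr WL` by `tr ULVL`, and
`tr UEVE = tr UE · tr VE` expresses this through shorter words, so `tr WL` does not depend on the
order of the letters of `W` modulo such polynomials. On the other hand `tr WL = tr [W, A]B`, and
commuting `A` through `W` letter by letter shows that this is `-m · tr WL` modulo the same
polynomials, where `m` is the number of letters `B` in `W`. As `1 + m ≠ 0`, the claim follows.

All this is done for matrices over the ring of functions on the locus, so that the polynomial in
traces does not depend on the point.
-/

section TraceAlgebra

variable {ι n K R S : Type*} [Fintype n] [DecidableEq n] [CommRing K] [CommRing R] [Algebra K R]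
  [CommRing S] [Algebra K S]

variable (K) in
/-- The `K`-subalgebra generated by the traces of words of length at most `d` in the matrices `M i`.
The bound is an integer, so that a negative one leaves only the constants. -/
def traceAlg (M : ι → Matrix n n R) (d : ℤ) : Subalgebra K R :=
  Algebra.adjoin K ((fun w : List ι => trace (w.map M).prod) '' {w | (w.length : ℤ) ≤ d})

variable {M : ι → Matrix n n R} {d d' : ℤ}

theorem trace_prod_mem_traceAlg {w : List ι} (hw : (w.length : ℤ) ≤ d) :
    trace (w.map M).prod ∈ traceAlg K M d :=
  Algebra.subset_adjoin ⟨w, hw, rfl⟩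

theorem traceAlg_mono (h : d ≤ d') : traceAlg K M d ≤ traceAlg K M d' :=
  Algebra.adjoin_mono <| Set.image_mono fun _ hw => le_trans hw h

theorem map_traceAlg (φ : R →ₐ[K] S) :
    (traceAlg K M d).map φ = traceAlg K (fun i => φ.mapMatrix (M i)) d := by
  have map_trace_prod (w : List ι) :
      φ (trace (w.map M).prod) = trace (w.map fun i => φ.mapMatrix (M i)).prod := by
    rw [AddMonoidHom.map_trace, ← AlgHom.mapMatrix_apply, map_list_prod, List.map_map,
      Function.comp_def]
  simp only [traceAlg, AlgHom.map_adjoin, Set.image_image, map_trace_prod]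

theorem traceAlg_sub_smul_one_le {t : ι → R} (ht : ∀ i, t i ∈ traceAlg K M 1) :
    traceAlg K (fun i => M i - t i • (1 : Matrix n n R)) d ≤ traceAlg K M d := by
  refine Algebra.adjoin_le ?_
  rintro _ ⟨w, hw, rfl⟩
  suffices H : ∀ u : List ι, (u.length : ℤ) + w.length ≤ d →
      trace ((u.map M).prod * (w.map fun i => M i - t i • (1 : Matrix n n R)).prod)
        ∈ traceAlg K M d by
    simpa using H [] (by simpa using hw)
  clear hw
  induction w with
  | nil => exact fun u hu => by simpa using trace_prod_mem_traceAlg (by simpa using hu)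
  | cons i w ih =>
    intro u hu
    rw [List.length_cons, Nat.cast_succ] at hu
    have h_keep := ih (u ++ [i]) (by grind)
    have h_drop := mul_mem (traceAlg_mono (by omega) (ht i)) (ih u (by omega))
    simpa [sub_mul, mul_sub, mul_assoc] using sub_mem h_keep h_drop

end TraceAlgebra

theorem sub_mem_of_perm_s5 {ι G σ : Type*} [LinearOrder ι] [AddCommGroup G] [SetLike σ G]
    [AddSubgroupClass σ G] {S : σ} {f : List ι → G} {w w' : List ι}
    (hf : ∀ (u v : List ι) (x y : ι), y < x → u.length + v.length + 2 = w.length →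
      f (u ++ x :: y :: v) - f (u ++ y :: x :: v) ∈ S)
    (h : w.Perm w') : f w - f w' ∈ S := by
  suffices H : ∀ u : List ι, (∀ (v₁ v₂ : List ι) (x y : ι), y < x →
      v₁.length + v₂.length + 2 = u.length + w.length →
        f (v₁ ++ x :: y :: v₂) - f (v₁ ++ y :: x :: v₂) ∈ S) → f (u ++ w) - f (u ++ w') ∈ S from
    H [] (by simpa using hf)
  clear hf
  induction h with
  | nil => simp
  | cons x _ ih =>
    intro u hu
    simpa using ih (u ++ [x]) (by grind)
  | swap x y l =>
    intro u hu
    rcases lt_trichotomy x y with hxy | rfl | hxy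
    · exact hu u l y x hxy (by grind)
    · simp
    · rw [← neg_sub]
      exact neg_mem (hu u l x y hxy (by grind))
  | trans h _ ih ih' =>
    intro u hu
    simpa using add_mem (ih u hu) (ih' u (by simpa only [h.length_eq] using hu))

section RankOneCommutator

variable {n K R : Type*} [Fintype n] [CommRing R]

theorem trace_mul_vecMulVec_mul_mul_vecMulVec (U V : Matrix n n R) (e f : n → R) :
    trace (U * vecMulVec e f * (V * vecMulVec e f))
      = trace (U * vecMulVec e f) * trace (V * vecMulVec e f) := by
  rw [mul_vecMulVec U, mul_vecMulVec V, vecMulVec_mul_vecMulVec]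
  simp [dotProduct_comm f, mul_comm]

variable [DecidableEq n]

theorem trace_mul_mul_of_eq_vecMulVec_add [CommRing K] [Algebra K R] {L : Matrix n n R}
    {e f : n → R} {c : K} (hL : L = vecMulVec e f + c • (1 : Matrix n n R)) (U V : Matrix n n R) :
    trace (U * L * (V * L)) = (trace (U * L) - c • trace U) * (trace (V * L) - c • trace V)
      + c • (trace (V * U * L) + trace (U * V * L) - c • trace (U * V)) := by
  have hE : vecMulVec e f = L - c • (1 : Matrix n n R) := by simp [hL]
  have h_mul := trace_mul_vecMulVec_mul_mul_vecMulVec U V e f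
  have h_cycle : trace (V * U * L) = trace (U * L * V) := by rw [mul_assoc, trace_mul_comm]
  simp only [hE, mul_sub, sub_mul, mul_smul_comm, smul_mul_assoc, mul_one, trace_sub, trace_smul]
    at h_mul
  simp only [h_cycle, mul_sub, sub_mul, ← mul_assoc] at h_mul ⊢
  simp only [Algebra.smul_def] at h_mul ⊢
  linear_combination h_mul

variable {M : Bool → Matrix n n R}

-- Commuting `M true` through the word `v` costs one commutator for each letter `M false`.
theorem trace_mul_lie_mul_add_count_smul_mem {σ : Type*} [SetLike σ R] [AddSubgroupClass σ R]
    {S : σ} {w : List Bool}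
    (hw : ∀ w' : List Bool, w.Perm w' → trace ((w.map M).prod * ⁅M true, M false⁆)
      - trace ((w'.map M).prod * ⁅M true, M false⁆) ∈ S)
    {u v : List Bool} (huv : w.Perm (u ++ v)) :
    trace ((u.map M).prod * ⁅(v.map M).prod, M true⁆ * M false)
      + v.count false • trace ((w.map M).prod * ⁅M true, M false⁆) ∈ S := by
  induction v generalizing u with
  | nil => simp [Ring.lie_def]
  | cons x v ih =>
    have h := ih (u := u ++ [x]) (by simpa using huv)
    cases x with
    | true => simpa [Ring.lie_def, mul_sub, sub_mul, mul_assoc] using h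
    | false =>
      have h_rotate : trace (((v ++ false :: u).map M).prod * ⁅M true, M false⁆)
          = trace ((u.map M).prod * (⁅M true, M false⁆ * (v.map M).prod * M false)) := by
        rw [trace_mul_comm, trace_mul_comm (u.map M).prod]
        simp [mul_assoc]
      have h_perm := hw (v ++ false :: u) (huv.trans (by grind))
      rw [h_rotate] at h_perm
      convert add_mem h h_perm using 1
      simp only [List.map_cons, List.map_append, List.map_nil, List.prod_cons, List.prod_append,
        List.prod_nil, mul_one, List.count_cons_self, succ_nsmul, Ring.lie_def, mul_sub, sub_mul,
        trace_sub, mul_assoc]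
      ring

theorem trace_mul_lie_sub_mem_of_perm [CommRing K] [Algebra K R] {e f : n → R} {c : K}
    (hM : ⁅M true, M false⁆ = vecMulVec e f + c • (1 : Matrix n n R)) {w w' : List Bool}
    (h_short : ∀ u : List Bool, u.length < w.length →
      trace ((u.map M).prod * ⁅M true, M false⁆) ∈ traceAlg K M (u.length - 2))
    (h : w.Perm w') :
    trace ((w.map M).prod * ⁅M true, M false⁆) - trace ((w'.map M).prod * ⁅M true, M false⁆)
      ∈ traceAlg K M (w.length - 2) := by
  refine sub_mem_of_perm_s5 (f := fun w => trace ((w.map M).prod * ⁅M true, M false⁆)) ?_ h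
  intro u v x y hxy huv
  obtain ⟨rfl, rfl⟩ := Bool.lt_iff.mp hxy
  have h_trace (s : List Bool) (hs : s.length + 2 ≤ w.length) :
      trace (s.map M).prod ∈ traceAlg K M (w.length - 2) :=
    trace_prod_mem_traceAlg (by omega)
  have h_lie (s : List Bool) (hs : s.length + 2 ≤ w.length) :
      trace ((s.map M).prod * ⁅M true, M false⁆) ∈ traceAlg K M (w.length - 2) :=
    traceAlg_mono (by omega) (h_short s (by omega))
  have h_swap : trace (((u ++ true :: false :: v).map M).prod * ⁅M true, M false⁆)
      - trace (((u ++ false :: true :: v).map M).prod * ⁅M true, M false⁆)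
      = trace ((u.map M).prod * ⁅M true, M false⁆ * ((v.map M).prod * ⁅M true, M false⁆)) := by
    simp only [List.map_append, List.map_cons, List.prod_append, List.prod_cons, Ring.lie_def,
      mul_sub, sub_mul, trace_sub, mul_assoc]
    ring
  rw [h_swap, trace_mul_mul_of_eq_vecMulVec_add hM]
  have h_uv := h_lie (u ++ v) (by grind)
  have h_vu := h_lie (v ++ u) (by grind)
  have h_uv' := h_trace (u ++ v) (by grind)
  simp only [List.map_append, List.prod_append] at h_uv h_vu h_uv'
  exact add_mem
    (mul_mem (sub_mem (h_lie u (by omega)) (Subalgebra.smul_mem _ (h_trace u (by omega)) c))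
      (sub_mem (h_lie v (by omega)) (Subalgebra.smul_mem _ (h_trace v (by omega)) c)))
    (Subalgebra.smul_mem _ (sub_mem (add_mem h_vu h_uv) (Subalgebra.smul_mem _ h_uv' c)) c)

variable [Field K] [CharZero K] [Algebra K R] {e f : n → R} {c : K}

theorem trace_prod_mul_lie_mem_traceAlg
    (hM : ⁅M true, M false⁆ = vecMulVec e f + c • (1 : Matrix n n R)) (w : List Bool) :
    trace ((w.map M).prod * ⁅M true, M false⁆) ∈ traceAlg K M (w.length - 2) := by
  induction hd : w.length using Nat.strong_induction_on generalizing w with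
  | _ d ih =>
    subst hd
    have h_perm (w' : List Bool) (h : w.Perm w') :=
      trace_mul_lie_sub_mem_of_perm hM (fun u hu => ih _ hu u rfl) h
    have h_commute := trace_mul_lie_mul_add_count_smul_mem h_perm (u := []) (v := w) (by simp)
    have h_cyclic : trace (⁅(w.map M).prod, M true⁆ * M false)
        = trace ((w.map M).prod * ⁅M true, M false⁆) := by
      simp only [Ring.lie_def, sub_mul, mul_sub, trace_sub, mul_assoc, trace_mul_comm (M true)]
    rw [List.map_nil, List.prod_nil, one_mul, h_cyclic, ← succ_nsmul',
      ← Nat.cast_smul_eq_nsmul K] at h_commute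
    have h_ne : ((w.count false + 1 : ℕ) : K) ≠ 0 := Nat.cast_ne_zero.mpr (Nat.succ_ne_zero _)
    exact ((traceAlg K M _).toSubmodule.smul_mem_iff h_ne).mp h_commute

theorem trace_prod_sub_mem_traceAlg_of_perm
    (hM : ⁅M true, M false⁆ = vecMulVec e f + c • (1 : Matrix n n R)) {w w' : List Bool}
    (h : w.Perm w') :
    trace (w.map M).prod - trace (w'.map M).prod ∈ traceAlg K M (w.length - 4) := by
  refine sub_mem_of_perm_s5 (f := fun w => trace (w.map M).prod) ?_ h
  intro u v x y hxy huv
  obtain ⟨rfl, rfl⟩ := Bool.lt_iff.mp hxy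
  have h_lie := traceAlg_mono (d' := w.length - 4) (by grind)
    (trace_prod_mul_lie_mem_traceAlg hM (v ++ u))
  have h_swap : trace (((v ++ u).map M).prod * ⁅M true, M false⁆)
      = trace ((u ++ true :: false :: v).map M).prod
        - trace ((u ++ false :: true :: v).map M).prod := by
    rw [List.map_append, List.prod_append, mul_assoc, trace_mul_comm]
    simp [Ring.lie_def, mul_sub, sub_mul, mul_assoc]
  rwa [← h_swap]

end RankOneCommutator

section PowDerivative

/-- The derivative of `a ↦ a ^ k` at `a` in the direction `x`. -/
def powDeriv {R : Type*} [Semiring R] (a : R) (k : ℕ) (x : R) : R :=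
  ∑ i ∈ Finset.range k, a ^ (k - 1 - i) * x * a ^ i

theorem map_powDeriv {R S F : Type*} [Semiring R] [Semiring S] [FunLike F R S]
    [RingHomClass F R S] (φ : F) (a : R) (k : ℕ) (x : R) :
    φ (powDeriv a k x) = powDeriv (φ a) k (φ x) := by
  simp only [powDeriv, map_sum, map_mul, map_pow]

theorem powDeriv_succ {R : Type*} [Semiring R] (a : R) (k : ℕ) (x : R) :
    powDeriv a (k + 1) x = powDeriv a k x * a + a ^ k * x := by
  rw [powDeriv, Finset.sum_range_succ', powDeriv, Finset.sum_mul]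
  congr 1
  · refine Finset.sum_congr rfl fun i _ => ?_
    rw [pow_succ, show k + 1 - 1 - (i + 1) = k - 1 - i by omega, mul_assoc _ (a ^ i)]
  · simp

variable {n K R : Type*} [Fintype n] [CommRing K] [CommRing R] [Algebra K R]
  (D : Derivation K R R)

theorem map_derivation_mul (M N : Matrix n n R) :
    (M * N).map D = M.map D * N + M * N.map D := by
  ext i j
  simp [mul_apply, Finset.sum_add_distrib, mul_comm, add_comm]

variable [DecidableEq n]

theorem trace_powDeriv (A : Matrix n n R) (k : ℕ) (N : Matrix n n R) :
    trace (powDeriv A k N) = k * trace (A ^ (k - 1) * N) := by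
  have h_term (i : ℕ) (hi : i ∈ Finset.range k) :
      trace (A ^ (k - 1 - i) * N * A ^ i) = trace (A ^ (k - 1) * N) := by
    rw [Finset.mem_range] at hi
    rw [trace_mul_comm, ← mul_assoc, ← pow_add, show i + (k - 1 - i) = k - 1 by omega]
  simp [powDeriv, trace_sum, Finset.sum_congr rfl h_term]

theorem trace_powDeriv_mul (A : Matrix n n R) (k : ℕ) (N L : Matrix n n R) :
    trace (powDeriv A k N * L) = trace (N * powDeriv A k L) := by
  rw [powDeriv, powDeriv, ← Finset.sum_range_reflect, Finset.sum_mul, Finset.mul_sum, trace_sum,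
    trace_sum]
  refine Finset.sum_congr rfl fun i hi => ?_
  rw [Finset.mem_range] at hi
  rw [show k - 1 - (k - 1 - i) = i by omega, mul_assoc, mul_assoc, trace_mul_comm]
  simp only [mul_assoc]

theorem map_derivation_pow (M : Matrix n n R) (k : ℕ) :
    (M ^ k).map D = powDeriv M k (M.map D) := by
  induction k with
  | zero =>
    ext i j
    by_cases h : i = j <;> simp [powDeriv, h]
  | succ k ih => rw [pow_succ, map_derivation_mul, ih, powDeriv_succ]

theorem derivation_trace_pow_mul {M N : Matrix n n R} (hN : N.map D = 0) (k : ℕ) :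
    D (trace (M ^ k * N)) = trace (M.map D * powDeriv M k N) := by
  rw [AddMonoidHom.map_trace, ← trace_powDeriv_mul, ← map_derivation_pow]
  congr 1
  exact (map_derivation_mul D _ _).trans (by rw [hN, mul_zero, add_zero])

end PowDerivative

section TracelessPart

variable (K : Type*) {n R : Type*} [Fintype n] [DecidableEq n] [Field K] [CommRing R] [Algebra K R]

/-- The traceless part `M - (tr M / |n|) I` of a matrix. -/
def tracelessPart (M : Matrix n n R) : Matrix n n R :=
  M - (algebraMap K R (Fintype.card n : K)⁻¹ * trace M) • (1 : Matrix n n R)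

theorem trace_tracelessPart_mul (M N : Matrix n n R) :
    trace (tracelessPart K M * N) = trace (M * tracelessPart K N) := by
  simp only [tracelessPart, sub_mul, mul_sub, trace_sub, smul_mul_assoc, mul_smul_comm, one_mul,
    mul_one, trace_smul, smul_eq_mul]
  ring

theorem trace_tracelessPart_mul_tracelessPart [CharZero K] [Nonempty n] (M N : Matrix n n R) :
    trace (tracelessPart K M * tracelessPart K N)
      = trace (M * N) - algebraMap K R (Fintype.card n : K)⁻¹ * (trace M * trace N) := by
  have h_card : algebraMap K R (Fintype.card n : K)⁻¹ * Fintype.card n = 1 := by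
    rw [← map_natCast (algebraMap K R), ← map_mul, inv_mul_cancel₀ (by simp), map_one]
  simp only [tracelessPart, sub_mul, mul_sub, trace_sub, trace_smul, smul_mul_assoc, one_mul,
    mul_smul_comm, mul_one, trace_one, smul_eq_mul]
  linear_combination
    (algebraMap K R (Fintype.card n : K)⁻¹ * trace M * trace N) * h_card

theorem tracelessPart_lie_tracelessPart (M N : Matrix n n R) :
    ⁅tracelessPart K M, tracelessPart K N⁆ = ⁅M, N⁆ := by
  simp only [tracelessPart, Ring.lie_def, mul_sub, sub_mul, smul_mul_assoc, mul_smul_comm, one_mul,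
    mul_one, smul_sub]
  rw [smul_comm]
  abel

theorem map_derivation_tracelessPart (D : Derivation K R R) (M : Matrix n n R) :
    (tracelessPart K M).map D = tracelessPart K (M.map D) := by
  have h_trace : D (trace M) = trace (M.map D) := AddMonoidHom.map_trace D M
  ext i j
  by_cases h : i = j <;> simp [tracelessPart, h, h_trace]

theorem traceAlg_tracelessPart_le {ι : Type*} (M : ι → Matrix n n R) (d : ℤ) :
    traceAlg K (fun i => tracelessPart K (M i)) d ≤ traceAlg K M d := by
  refine traceAlg_sub_smul_one_le fun i => mul_mem (Subalgebra.algebraMap_mem _ _) ?_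
  simpa using trace_prod_mem_traceAlg (K := K) (M := M) (d := 1) (w := [i]) (by simp)

end TracelessPart

section PowDerivativeWords

variable {n K R : Type*} [Fintype n] [DecidableEq n] [Field K] [CharZero K] [CommRing R]
  [Algebra K R] {M : Bool → Matrix n n R} {e f : n → R} {c : K}

theorem trace_powDeriv_mul_powDeriv_sub_mem_traceAlg
    (hM : ⁅M true, M false⁆ = vecMulVec e f + c • (1 : Matrix n n R)) (j k p q : ℕ) :
    trace (powDeriv (M true) j (M false ^ k) * powDeriv (M false) q (M true ^ p))
        - (j * q : R) * trace (M true ^ (j + p - 1) * M false ^ (k + q - 1))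
      ∈ traceAlg K M (j + k + p + q - 6) := by
  have h_expand : trace (powDeriv (M true) j (M false ^ k) * powDeriv (M false) q (M true ^ p))
        - (j * q : R) * trace (M true ^ (j + p - 1) * M false ^ (k + q - 1))
      = ∑ s ∈ Finset.range j, ∑ t ∈ Finset.range q,
        (trace ((M true ^ (j - 1 - s) * M false ^ k * M true ^ s)
            * (M false ^ (q - 1 - t) * M true ^ p * M false ^ t))
          - trace (M true ^ (j + p - 1) * M false ^ (k + q - 1))) := by
    simp [powDeriv, Finset.sum_mul_sum, trace_sum, mul_assoc]
  rw [h_expand]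
  refine sum_mem fun s hs => sum_mem fun t ht => ?_
  rw [Finset.mem_range] at hs ht
  have h_perm : (List.replicate (j - 1 - s) true ++ List.replicate k false
        ++ List.replicate s true ++ (List.replicate (q - 1 - t) false ++ List.replicate p true
        ++ List.replicate t false)).Perm
      (List.replicate (j + p - 1) true ++ List.replicate (k + q - 1) false) := by
    rw [List.perm_iff_count]
    rintro (_ | _) <;> simp [List.count_replicate] <;> omega
  have h_mem := traceAlg_mono (d' := j + k + p + q - 6) (by simp; omega)
    (trace_prod_sub_mem_traceAlg_of_perm hM h_perm)
  simpa [mul_assoc] using h_mem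

end PowDerivativeWords

section PoissonBracket

variable {n : ℕ}

theorem Amat_eq_tracelessPart : Amat n = tracelessPart ℂ (Xmat n) := by
  simp [Amat, tracelessPart, MvPolynomial.algebraMap_eq]

theorem Bmat_eq_tracelessPart : Bmat n = tracelessPart ℂ (Ymat n) := by
  simp [Bmat, tracelessPart, MvPolynomial.algebraMap_eq]

/-- The gradient `(∂F/∂Z_{kj})_{jk}` of a polynomial function, where `Z = X` for `emb = Sum.inl` and
`Z = Y` for `emb = Sum.inr`. The transposition turns the Poisson bracket into a trace of matrix
products. -/
noncomputable def matrixGrad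
    (emb : Fin n × Fin n → (Fin n × Fin n) ⊕ (Fin n × Fin n)) (F : PolyFun n) :
    Matrix (Fin n) (Fin n) (PolyFun n) :=
  .of fun j k => pderiv (emb (k, j)) F

theorem pbracket_eq_trace_matrixGrad (F G : PolyFun n) :
    pbracket F G = trace (matrixGrad .inl F * matrixGrad .inr G)
      - trace (matrixGrad .inl G * matrixGrad .inr F) := by
  rw [trace_mul_comm (matrixGrad .inl F)]
  simp [pbracket, matrixGrad, trace, mul_apply, mul_comm]

theorem matrixGrad_trace_pow_mul_pow
    {emb : Fin n × Fin n → (Fin n × Fin n) ⊕ (Fin n × Fin n)}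
    {Z W : Matrix (Fin n) (Fin n) (PolyFun n)}
    (hZ : ∀ a b, Z.map (pderiv (emb (a, b))) = single a b 1)
    (hW : ∀ a b, W.map (pderiv (emb (a, b))) = 0) (k l : ℕ) :
    matrixGrad emb (trace (tracelessPart ℂ Z ^ k * tracelessPart ℂ W ^ l))
      = tracelessPart ℂ (powDeriv (tracelessPart ℂ Z) k (tracelessPart ℂ W ^ l)) := by
  have hW_pow (a b : Fin n) : (tracelessPart ℂ W ^ l).map (pderiv (emb (a, b))) = 0 := by
    rw [map_derivation_pow, map_derivation_tracelessPart, hW]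
    simp [tracelessPart, powDeriv]
  ext a b : 2
  rw [matrixGrad, of_apply, derivation_trace_pow_mul _ (hW_pow _ _), map_derivation_tracelessPart,
    hZ, trace_tracelessPart_mul, trace_single_mul, one_smul]

theorem Xmat_map_pderiv_inl (a b : Fin n) :
    (Xmat n).map (pderiv (.inl (a, b))) = single a b 1 := by
  ext i j : 2
  simp [Xmat, pderiv_X, Pi.single_apply, single_apply, eq_comm]

theorem Xmat_map_pderiv_inr (a b : Fin n) : (Xmat n).map (pderiv (.inr (a, b))) = 0 := by
  ext i j : 2
  simp [Xmat, pderiv_X]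

theorem Ymat_map_pderiv_inl (a b : Fin n) : (Ymat n).map (pderiv (.inl (a, b))) = 0 := by
  ext i j : 2
  simp [Ymat, pderiv_X]

theorem Ymat_map_pderiv_inr (a b : Fin n) :
    (Ymat n).map (pderiv (.inr (a, b))) = single a b 1 := by
  ext i j : 2
  simp [Ymat, pderiv_X, Pi.single_apply, single_apply, eq_comm]

theorem matrixGrad_inl_trAB (j k : ℕ) :
    matrixGrad .inl (trAB n j k) = tracelessPart ℂ (powDeriv (Amat n) j (Bmat n ^ k)) := by
  rw [trAB, Amat_eq_tracelessPart, Bmat_eq_tracelessPart,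
    matrixGrad_trace_pow_mul_pow Xmat_map_pderiv_inl Ymat_map_pderiv_inl]

theorem matrixGrad_inr_trAB (j k : ℕ) :
    matrixGrad .inr (trAB n j k) = tracelessPart ℂ (powDeriv (Bmat n) k (Amat n ^ j)) := by
  rw [trAB, trace_mul_comm, Amat_eq_tracelessPart, Bmat_eq_tracelessPart,
    matrixGrad_trace_pow_mul_pow Ymat_map_pderiv_inr Xmat_map_pderiv_inr]

theorem pbracket_trAB (hn : 1 ≤ n) (j k p q : ℕ) :
    pbracket (trAB n j k) (trAB n p q)
      = trace (powDeriv (Amat n) j (Bmat n ^ k) * powDeriv (Bmat n) q (Amat n ^ p))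
        - trace (powDeriv (Amat n) p (Bmat n ^ q) * powDeriv (Bmat n) k (Amat n ^ j))
        - C (n : ℂ)⁻¹ * (C ((j : ℂ) * q) * (trAB n (j - 1) k * trAB n p (q - 1))
          - C ((k : ℂ) * p) * (trAB n j (k - 1) * trAB n (p - 1) q)) := by
  have : Nonempty (Fin n) := ⟨⟨0, hn⟩⟩
  simp only [pbracket_eq_trace_matrixGrad, matrixGrad_inl_trAB, matrixGrad_inr_trAB,
    trace_tracelessPart_mul_tracelessPart, trace_powDeriv, Fintype.card_fin]
  simp only [trAB, trace_mul_comm (Bmat n ^ _), MvPolynomial.algebraMap_eq, map_mul, map_natCast]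
  ring

end PoissonBracket

section MatrixMonomials

variable {n : ℕ}

/-- The pair of coordinate matrices, indexed by the letters `true` for `X` and `false` for `Y`. -/
noncomputable def coordMat (n : ℕ) (b : Bool) : Matrix (Fin n) (Fin n) (PolyFun n) :=
  bif b then Xmat n else Ymat n

theorem traceAlg_coordMat_le_adjoin (d : ℤ) :
    traceAlg ℂ (coordMat n) d ≤ Algebra.adjoin ℂ {F : PolyFun n | ∃ L : List (ℕ × ℕ),
      (monoDeg L : ℤ) ≤ d ∧ F = trace (matMono n L)} := by
  have h_deg (w : List Bool) :
      monoDeg (w.map fun b => bif b then (1, 0) else (0, 1)) = w.length := by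
    induction w with
    | nil => rfl
    | cons b w ih => cases b <;> simp [monoDeg] at ih ⊢ <;> omega
  have h_mono (w : List Bool) :
      matMono n (w.map fun b => bif b then (1, 0) else (0, 1)) = (w.map (coordMat n)).prod := by
    induction w with
    | nil => rfl
    | cons b w ih =>
      rw [List.map_cons, matMono, List.foldr_cons, ← matMono, ih]
      cases b <;> simp [coordMat]
  refine Algebra.adjoin_mono ?_
  rintro _ ⟨w, hw, rfl⟩
  exact ⟨_, (congrArg Nat.cast (h_deg w)).trans_le hw, by rw [h_mono]⟩

end MatrixMonomials

section RankOneLocus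

theorem exists_eq_vecMulVec_of_rank_le_one {m n K : Type*} [Fintype n] [Field K]
    {M : Matrix m n K} (h : M.rank ≤ 1) : ∃ (e : m → K) (f : n → K), M = vecMulVec e f := by
  classical
  obtain ⟨e, he⟩ := finrank_le_one_iff.mp h
  choose f hf using fun j : n => he ⟨M.mulVecLin (Pi.single j 1), LinearMap.mem_range_self _ _⟩
  refine ⟨e.1, f, ?_⟩
  ext i j
  simpa [vecMulVec_apply, mul_comm] using (congrFun (congrArg Subtype.val (hf j)) i).symm

variable {n : ℕ} {Z : Set (Matrix (Fin n) (Fin n) ℂ × Matrix (Fin n) (Fin n) ℂ)} {c : ℂ}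

/-- Restriction of polynomial functions to a set of pairs of matrices, as a map to the algebra of
all functions on that set. -/
noncomputable def restrictTo
    (Z : Set (Matrix (Fin n) (Fin n) ℂ × Matrix (Fin n) (Fin n) ℂ)) : PolyFun n →ₐ[ℂ] (Z → ℂ) :=
  AlgHom.pi fun P => aeval (Sum.elim (fun p => P.1.1 p.1 p.2) fun p => P.1.2 p.1 p.2)

theorem restrictTo_apply (F : PolyFun n) (P : Z) : restrictTo Z F P = evalP P.1.1 P.1.2 F := by
  simp [restrictTo, evalP, aeval_eq_eval]

theorem exists_restrictTo_lie_eq_vecMulVec_add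
    (hZ : ∀ P ∈ Z, (P.1 * P.2 - P.2 * P.1 - c • (1 : Matrix (Fin n) (Fin n) ℂ)).rank ≤ 1) :
    ∃ e f : Fin n → Z → ℂ,
      ⁅(restrictTo Z).mapMatrix (Xmat n), (restrictTo Z).mapMatrix (Ymat n)⁆
        = vecMulVec e f + c • (1 : Matrix (Fin n) (Fin n) (Z → ℂ)) := by
  choose e f hef using fun P : Z => exists_eq_vecMulVec_of_rank_le_one (hZ P P.2)
  refine ⟨fun i P => e P i, fun i P => f P i, ?_⟩
  ext i j P
  have h_entry := congrFun (congrFun (hef P) i) j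
  by_cases hij : i = j <;>
    simp [Ring.lie_def, mul_apply, vecMulVec_apply, Xmat, Ymat, restrictTo, hij] at h_entry ⊢ <;>
    linear_combination h_entry

theorem exists_restrictTo_trace_powDeriv_mul_powDeriv
    (hZ : ∀ P ∈ Z, (P.1 * P.2 - P.2 * P.1 - c • (1 : Matrix (Fin n) (Fin n) ℂ)).rank ≤ 1)
    (j k p q : ℕ) :
    ∃ h ∈ traceAlg ℂ (coordMat n) (j + k + p + q - 6),
      restrictTo Z (trace (powDeriv (Amat n) j (Bmat n ^ k) * powDeriv (Bmat n) q (Amat n ^ p)))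
        = restrictTo Z ((j * q : PolyFun n) * trAB n (j + p - 1) (k + q - 1) + h) := by
  obtain ⟨e, f, hef⟩ := exists_restrictTo_lie_eq_vecMulVec_add hZ
  set M := fun b => (restrictTo Z).mapMatrix (tracelessPart ℂ (coordMat n b)) with hM_def
  have hM : ⁅M true, M false⁆ = vecMulVec e f + c • (1 : Matrix (Fin n) (Fin n) (Z → ℂ)) := by
    rw [← hef]
    simp only [hM_def, Ring.lie_def, ← map_mul, ← map_sub]
    rw [← Ring.lie_def, tracelessPart_lie_tracelessPart, Ring.lie_def, coordMat, coordMat,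
      cond_true, cond_false]
  have h_mem := trace_powDeriv_mul_powDeriv_sub_mem_traceAlg hM j k p q
  rw [hM_def, ← map_traceAlg] at h_mem
  obtain ⟨h, hh, h_eq⟩ := h_mem
  refine ⟨h, traceAlg_tracelessPart_le _ _ _ hh, ?_⟩
  have h_trace (N : Matrix (Fin n) (Fin n) (PolyFun n)) :
      restrictTo Z (trace N) = trace ((restrictTo Z).mapMatrix N) := AddMonoidHom.map_trace _ N
  simp only [coordMat, cond_true, cond_false, ← Amat_eq_tracelessPart, ← Bmat_eq_tracelessPart,
    ← map_pow, ← map_powDeriv, ← map_mul, ← h_trace] at h_eq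
  rw [map_add, map_mul, map_mul, map_natCast, map_natCast, trAB, ← sub_eq_iff_eq_add']
  exact h_eq.symm

end RankOneLocus

theorem stmt_5_general (n : ℕ) (hn : 1 ≤ n) (c : ℂ) (j k p q : ℕ) :
    ∃ h ∈ Algebra.adjoin ℂ {F : PolyFun n | ∃ L : List (ℕ × ℕ),
        (monoDeg L : ℤ) ≤ (j : ℤ) + (k : ℤ) + (p : ℤ) + (q : ℤ) - 6 ∧
        F = trace (matMono n L)},
      ∀ X Y : Matrix (Fin n) (Fin n) ℂ, (X * Y - Y * X - c • 1).rank ≤ 1 →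
        evalP X Y (pbracket (trAB n j k) (trAB n p q))
          = evalP X Y
              (C ((j : ℂ) * (q : ℂ) - (k : ℂ) * (p : ℂ)) * trAB n (j + p - 1) (k + q - 1)
                - C ((n : ℂ)⁻¹) *
                    (C ((j : ℂ) * (q : ℂ)) * (trAB n (j - 1) k * trAB n p (q - 1))
                      - C ((k : ℂ) * (p : ℂ)) * (trAB n j (k - 1) * trAB n (p - 1) q))
                + h) := by
  let Z : Set (Matrix (Fin n) (Fin n) ℂ × Matrix (Fin n) (Fin n) ℂ) :=
    {P | (P.1 * P.2 - P.2 * P.1 - c • 1).rank ≤ 1}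
  obtain ⟨h₁, h₁_mem, h₁_eq⟩ :=
    exists_restrictTo_trace_powDeriv_mul_powDeriv (Z := Z) (fun _ => id) j k p q
  obtain ⟨h₂, h₂_mem, h₂_eq⟩ :=
    exists_restrictTo_trace_powDeriv_mul_powDeriv (Z := Z) (fun _ => id) p q j k
  rw [show (p + q + j + k - 6 : ℤ) = j + k + p + q - 6 by ring] at h₂_mem
  rw [add_comm p j, add_comm q k] at h₂_eq
  refine ⟨h₁ - h₂, traceAlg_coordMat_le_adjoin _ (sub_mem h₁_mem h₂_mem), fun X Y hXY => ?_⟩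
  rw [← restrictTo_apply _ (⟨(X, Y), hXY⟩ : Z), ← restrictTo_apply _ (⟨(X, Y), hXY⟩ : Z)]
  refine congrFun ?_ _
  rw [pbracket_trAB hn, map_sub, map_sub, h₁_eq, h₂_eq]
  simp only [map_sub, map_add, map_mul, map_natCast]
  ring

/-- for `j, k, p, q ≥ 1` there is a polynomial function `h`,
a polynomial in traces of matrix monomials of degree at most `j+k+p+q−6`,
such that at every point of `Ĉ_n`:
`{tr A^j B^k, tr A^p B^q} = (jq−kp) tr(A^{j+p−1}B^{k+q−1})
 − (1/n)(jq tr(A^{j−1}B^k) tr(A^p B^{q−1}) − kp tr(A^j B^{k−1}) tr(A^{p−1}B^q)) + h`. -/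
theorem stmt_5 (n : ℕ) (hn : 1 ≤ n) (j k p q : ℕ)
    (hj : 1 ≤ j) (hk : 1 ≤ k) (hp : 1 ≤ p) (hq : 1 ≤ q) :
    ∃ h ∈ Algebra.adjoin ℂ {F : PolyFun n | ∃ L : List (ℕ × ℕ),
        (monoDeg L : ℤ) ≤ (j : ℤ) + (k : ℤ) + (p : ℤ) + (q : ℤ) - 6 ∧
        F = Matrix.trace (matMono n L)},
      ∀ P ∈ Chat n,
        evalP P.1 P.2 (pbracket (trAB n j k) (trAB n p q))
          = evalP P.1 P.2
              (MvPolynomial.C ((j : ℂ) * (q : ℂ) - (k : ℂ) * (p : ℂ)) *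
                  trAB n (j + p - 1) (k + q - 1)
                - MvPolynomial.C ((n : ℂ)⁻¹) *
                    (MvPolynomial.C ((j : ℂ) * (q : ℂ)) *
                        (trAB n (j - 1) k * trAB n p (q - 1))
                      - MvPolynomial.C ((k : ℂ) * (p : ℂ)) *
                        (trAB n j (k - 1) * trAB n (p - 1) q))
                + h) := by
  obtain ⟨h, h_mem, h_eq⟩ := stmt_5_general n hn Complex.I j k p q
  exact ⟨h, h_mem, fun P hP => h_eq P.1 P.2 (le_of_eq hP)⟩
end
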